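/- (Generation in degree 1 for arbitrary weights.) Let k be a field of characteristic 0 and let w = (w_1,…,w_n) ∈ ℕⁿ be a weight vector with w_1 + … + w_n even. For every integer m ≥ 1, every element of R_{m·w} is a k-linear combination of products f_1·f_2⋯f_m with each factor f_j ∈ R_w. In other words, the graded ring ⊕_{m≥0} R_{m·w} is generated in degree 1. -/

import Mathlib

/-!
*Invariants are combinations of products of brackets.* Since transvections fix an invariant `f`,
differentiating shows that `f` is killed by the off-diagonal polarization operators. For such an
`f`, homogeneous of degree `N`, Capelli's identity becomes `2 ∑_{a,b} [ab] Ω_ab f = N (N + 2) f`,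
where the `Ω_ab` are Cayley's operators. Each `Ω_ab f` has lower degree and is again killed, so in
characteristic `0` induction on `N` writes `f` in terms of graph monomials.

*Graph monomials factor (after Kempe).* Write `∑ w_i = 2l`, replace the point `i` by a clump of
`w_i` points and split the resulting `2l` points into two halves `L` and `R`. A graph of valence
`m·w` lifts to an `m`-regular graph on `L ⊕ R`, which has as many edges inside `L` as inside `R`.
The Plücker relation `[ab][cd] = [ac][bd] − [ad][bc]` trades one edge of each kind for two edges
between the halves, so only `m`-regular bipartite graphs matter. By Hall's theorem such a graph is a
sum of `m` perfect matchings, and the monomial of a perfect matching lies in `R_w`.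
-/

open MvPolynomial

/-- The polynomial ring `A = k[x_1, y_1, …, x_n, y_n]`: variable `(i, 0)` is `x_i`
and `(i, 1)` is `y_i`. -/
abbrev PtRing (k : Type) [CommRing k] (n : ℕ) := MvPolynomial (Fin n × Fin 2) k

/-- The bracket `[ab] = x_a y_b − x_b y_a`. -/
noncomputable def bracket (k : Type) [CommRing k] (n : ℕ) (a b : Fin n) : PtRing k n :=
  X (a, 0) * X (b, 1) - X (b, 0) * X (a, 1)

/-- The graph monomial `m_Γ = ∏_{(a,b) ∈ Γ} [ab]` of a directed graph `Γ`,
viewed as a multiset of directed edges. -/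
noncomputable def graphMonomial (k : Type) [CommRing k] (n : ℕ)
    (Γ : Multiset (Fin n × Fin n)) : PtRing k n :=
  (Γ.map fun e => bracket k n e.1 e.2).prod

/-- The `k`-algebra endomorphism of `A` induced by a `2×2` matrix `g = ((p,q),(r,s))`:
`x_i ↦ p·x_i + r·y_i` and `y_i ↦ q·x_i + s·y_i`. -/
noncomputable def subst (k : Type) [CommRing k] (n : ℕ) (g : Matrix (Fin 2) (Fin 2) k) :
    PtRing k n →ₐ[k] PtRing k n :=
  aeval fun p =>
    if p.2 = 0 then C (g 0 0) * X (p.1, 0) + C (g 1 0) * X (p.1, 1)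
    else C (g 0 1) * X (p.1, 0) + C (g 1 1) * X (p.1, 1)

/-- The valence vector of a directed graph: the `i`-th entry is the number of edges
(with multiplicity) having `i` as an endpoint. -/
def valence (n : ℕ) (Γ : Multiset (Fin n × Fin n)) : Fin n → ℕ :=
  fun i => (Γ.map Prod.fst).count i + (Γ.map Prod.snd).count i

/-- `R_v`: the space of `SL₂(k)`-invariant multihomogeneous polynomials of multidegree `v`. -/
noncomputable def Rv (k : Type) [CommRing k] (n : ℕ) (v : Fin n → ℕ) :
    Submodule k (PtRing k n) :=
  (⨅ g : Matrix.SpecialLinearGroup (Fin 2) k,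
      LinearMap.ker ((subst k n (g : Matrix (Fin 2) (Fin 2) k)).toLinearMap
        - (LinearMap.id : PtRing k n →ₗ[k] PtRing k n))) ⊓
  weightedHomogeneousSubmodule k (fun p : Fin n × Fin 2 => Finsupp.single p.1 1)
    (Finsupp.equivFunOnFinite.symm v)

/-! ### Polarization and Cayley's operators -/

section Polarization

variable {ι κ σ R : Type*} [CommRing R]

lemma commutator_apply_eq_of_forall_X
    {D₁ D₂ D₃ : Derivation R (MvPolynomial σ R) (MvPolynomial σ R)}
    (h : ∀ s, D₁ (D₂ (X s)) - D₂ (D₁ (X s)) = D₃ (X s)) (f : MvPolynomial σ R) :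
    D₁ (D₂ f) - D₂ (D₁ f) = D₃ f := by
  have commutator_eq : ⁅D₁, D₂⁆ = D₃ :=
    derivation_ext fun s => (Derivation.commutator_apply ..).trans (h s)
  rw [← commutator_eq, Derivation.commutator_apply]

lemma pderiv_pderiv_comm (s t : σ) (f : MvPolynomial σ R) :
    pderiv s (pderiv t f) = pderiv t (pderiv s f) := by
  classical
  refine sub_eq_zero.1 (commutator_apply_eq_of_forall_X (D₃ := 0) (fun r => ?_) f)
  simp only [pderiv_X, Pi.single_apply]
  split_ifs <;> simp

variable [DecidableEq κ]

/-- The polarization operator `D_ij = ∑_a z_ai ∂/∂z_aj` on polynomials in variables `z_ai`, the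
infinitesimal form of the substitutions `z_aj ↦ z_aj + t z_ai`. It is encoded as the derivation with
`z_aj ↦ z_ai` and `z_al ↦ 0` for `l ≠ j`, so that `ι` need not be finite. -/
noncomputable def polarization (i j : κ) :
    Derivation R (MvPolynomial (ι × κ) R) (MvPolynomial (ι × κ) R) :=
  mkDerivation R fun p => if p.2 = j then X (p.1, i) else 0

lemma polarization_X (i j : κ) (p : ι × κ) :
    polarization i j (X p : MvPolynomial (ι × κ) R) = if p.2 = j then X (p.1, i) else 0 :=
  mkDerivation_X R _ _

lemma pderiv_polarization (a : ι) (i j l : κ) (f : MvPolynomial (ι × κ) R) :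
    pderiv (a, l) (polarization i j f) =
      polarization i j (pderiv (a, l) f) + if l = i then pderiv (a, j) f else 0 := by
  classical
  rw [← sub_eq_iff_eq_add', commutator_apply_eq_of_forall_X
    (D₃ := if l = i then pderiv (a, j) else 0) fun p => ?_]
  · split_ifs <;> rfl
  · obtain ⟨b, m⟩ := p
    simp only [polarization_X, pderiv_X, Pi.single_apply]
    split_ifs <;> simp_all [Pi.single_apply, pderiv_X, eq_comm]

lemma polarization_commutator (i j : κ) (f : MvPolynomial (ι × κ) R) :
    polarization i j (polarization j i f) - polarization j i (polarization i j f) =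
      polarization i i f - polarization j j f := by
  refine commutator_apply_eq_of_forall_X (D₃ := polarization i i - polarization j j) (fun p => ?_) f
  simp only [Derivation.sub_apply, polarization_X]
  split_ifs <;> simp_all [polarization_X]

lemma polarization_apply [Fintype ι] (i j : κ) (f : MvPolynomial (ι × κ) R) :
    polarization i j f = ∑ a, X (a, i) * pderiv (a, j) f := by
  classical
  have sum_apply (g : MvPolynomial (ι × κ) R) :
      (∑ a, (X (a, i) : MvPolynomial (ι × κ) R) • pderiv (a, j)) g =
        ∑ a, X (a, i) * pderiv (a, j) g := by
    rw [← Derivation.coeFnAddMonoidHom_apply, map_sum, Finset.sum_apply]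
    rfl
  rw [← sum_apply]
  refine DFunLike.congr_fun (derivation_ext fun p => ?_) f
  obtain ⟨b, l⟩ := p
  rw [polarization_X, sum_apply]
  by_cases hl : l = j <;> simp [pderiv_X, Pi.single_apply, hl]

lemma sum_polarization_self [Finite ι] [Fintype κ] {f : MvPolynomial (ι × κ) R} {N : ℕ}
    (hf : f.IsHomogeneous N) : ∑ i, polarization i i f = N • f := by
  cases nonempty_fintype ι
  simp only [polarization_apply]
  rw [Finset.sum_comm, ← hf.sum_X_mul_pderiv, Fintype.sum_prod_type]

lemma sum_X_mul_X_mul_pderiv_pderiv [Fintype ι] (i j l m : κ) (f : MvPolynomial (ι × κ) R) :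
    ∑ a, ∑ b, X (a, i) * X (b, j) * pderiv (a, l) (pderiv (b, m) f) =
      polarization i l (polarization j m f) - if l = j then polarization i m f else 0 := by
  have sum_b (a : ι) : ∑ b, X (b, j) * pderiv (a, l) (pderiv (b, m) f) =
      pderiv (a, l) (polarization j m f) - if l = j then pderiv (a, m) f else 0 := by
    rw [pderiv_polarization, add_sub_cancel_right, polarization_apply]
    simp only [pderiv_pderiv_comm (a, l)]
  simp only [mul_assoc, ← Finset.mul_sum, sum_b, mul_sub, Finset.sum_sub_distrib]
  rw [polarization_apply i l]
  split_ifs <;> simp [polarization_apply]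

end Polarization

section Cayley

variable {k : Type} [CommRing k] {n : ℕ}

/-- Cayley's operator `Ω_ab = ∂²/∂x_a∂y_b − ∂²/∂y_a∂x_b`, the differential operator dual to the
bracket `[ab]`. -/
noncomputable def cayleyOmega (a b : Fin n) (f : PtRing k n) : PtRing k n :=
  pderiv (a, 0) (pderiv (b, 1) f) - pderiv (a, 1) (pderiv (b, 0) f)

lemma polarization_cayleyOmega {i j : Fin 2} (hij : i ≠ j) (a b : Fin n) (f : PtRing k n) :
    polarization i j (cayleyOmega a b f) = cayleyOmega a b (polarization i j f) := by
  simp only [cayleyOmega, map_sub, pderiv_polarization, map_add]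
  fin_cases i <;> fin_cases j <;> simp_all

lemma isHomogeneous_cayleyOmega {f : PtRing k n} {N : ℕ} (hf : f.IsHomogeneous N) (a b : Fin n) :
    (cayleyOmega a b f).IsHomogeneous (N - 2) :=
  hf.pderiv.pderiv.sub hf.pderiv.pderiv

lemma sum_bracket_mul_cayleyOmega (f : PtRing k n) :
    ∑ a, ∑ b, bracket k n a b * cayleyOmega a b f =
      polarization 0 0 (polarization 1 1 f) + polarization 1 1 (polarization 0 0 f) +
        (polarization 0 0 f + polarization 1 1 f) -
          (polarization 0 1 (polarization 1 0 f) + polarization 1 0 (polarization 0 1 f)) := by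
  have expand (a b : Fin n) : bracket k n a b * cayleyOmega a b f =
      X (a, 0) * X (b, 1) * pderiv (a, 0) (pderiv (b, 1) f) +
        X (a, 1) * X (b, 0) * pderiv (a, 1) (pderiv (b, 0) f) -
          (X (a, 0) * X (b, 1) * pderiv (a, 1) (pderiv (b, 0) f) +
            X (a, 1) * X (b, 0) * pderiv (a, 0) (pderiv (b, 1) f)) := by
    rw [bracket, cayleyOmega]
    ring
  simp only [expand, Finset.sum_add_distrib, Finset.sum_sub_distrib, sum_X_mul_X_mul_pderiv_pderiv]
  simp only [Fin.isValue, zero_ne_one, ↓reduceIte, sub_zero, one_ne_zero]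
  ring

lemma two_smul_sum_bracket_mul_cayleyOmega {f : PtRing k n} {N : ℕ} (hf : f.IsHomogeneous N)
    (h : ∀ i j, i ≠ j → polarization i j f = 0) :
    2 • ∑ a, ∑ b, bracket k n a b * cayleyOmega a b f = (N * (N + 2)) • f := by
  have euler : polarization 0 0 f + polarization 1 1 f = N • f := by
    rw [← sum_polarization_self hf, Fin.sum_univ_two]
  have diagonal_eq : polarization 0 0 f = polarization 1 1 f := by
    rw [← sub_eq_zero, ← polarization_commutator, h 0 1 (by simp), h 1 0 (by simp), map_zero,
      map_zero, sub_zero]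
  have two_smul_diagonal : 2 • polarization 1 1 f = N • f := by
    rw [two_nsmul, ← euler, diagonal_eq]
  have two_smul_mixed (i : Fin 2) :
      2 • polarization i i (polarization 1 1 f) = N • polarization i i f := by
    rw [← map_nsmul, two_smul_diagonal, map_nsmul]
  have h₀ := two_smul_mixed 0
  have h₁ := two_smul_mixed 1
  rw [sum_bracket_mul_cayleyOmega, h 0 1 (by simp), h 1 0 (by simp), diagonal_eq]
  simp only [nsmul_eq_mul, map_zero, diagonal_eq] at euler h₀ h₁ ⊢
  push_cast
  linear_combination h₀ + h₁ + (N + 2) * euler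

end Cayley

/-! ### Invariants and polarization -/

section Shear

variable {ι κ R : Type*} [CommRing R] [DecidableEq κ]

/-- The family of substitutions `z_aj ↦ z_aj + T z_ai` with a formal parameter `T`, used to
differentiate the action of a one-parameter group over an arbitrary ring. -/
noncomputable def shear (i j : κ) :
    MvPolynomial (ι × κ) R →ₐ[R] Polynomial (MvPolynomial (ι × κ) R) :=
  aeval fun p => Polynomial.C (X p) +
    if p.2 = j then Polynomial.X * Polynomial.C (X (p.1, i)) else 0

lemma eval_shear (i j : κ) (s f : MvPolynomial (ι × κ) R) :
    (shear i j f).eval s =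
      aeval (fun p => X p + if p.2 = j then s * X (p.1, i) else 0) f := by
  have algHom_eq : ((Polynomial.aeval s).restrictScalars R).comp (shear i j) =
      aeval (fun p => X p + if p.2 = j then s * X (p.1, i) else 0) := by
    refine algHom_ext fun p => ?_
    by_cases hp : p.2 = j <;> simp [shear, hp, mul_comm s]
  rw [← algHom_eq]
  simp

lemma eval_zero_shear (i j : κ) (f : MvPolynomial (ι × κ) R) : (shear i j f).eval 0 = f := by
  simp [eval_shear]

lemma derivative_shear {i j : κ} (hij : i ≠ j) (f : MvPolynomial (ι × κ) R) :
    Polynomial.derivative (shear i j f) = shear i j (polarization i j f) := by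
  induction f using MvPolynomial.induction_on with
  | C r =>
    rw [← algebraMap_eq, AlgHom.commutes, Derivation.map_algebraMap, map_zero]
    exact Polynomial.derivative_C
  | add p q hp hq => simp only [map_add, hp, hq]
  | mul_X p q hp =>
    have derivative_X : Polynomial.derivative (shear i j (X q : MvPolynomial (ι × κ) R)) =
        shear i j (polarization i j (X q)) := by
      rw [polarization_X]
      by_cases hq : q.2 = j <;> simp [shear, hq, hij]
    rw [map_mul, Polynomial.derivative_mul, hp, derivative_X, Derivation.leibniz]
    simp only [smul_eq_mul, map_add, map_mul]
    ring

end Shear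

section Invariants

variable {k : Type} [CommRing k] {n : ℕ}

lemma subst_X (g : Matrix (Fin 2) (Fin 2) k) (p : Fin n × Fin 2) :
    subst k n g (X p) = ∑ i, C (g i p.2) * X (p.1, i) := by
  obtain ⟨a, j⟩ := p
  fin_cases j <;> simp [subst]

lemma mem_Rv_iff {v : Fin n → ℕ} {f : PtRing k n} :
    f ∈ Rv k n v ↔ (∀ g : Matrix (Fin 2) (Fin 2) k, g.det = 1 → subst k n g f = f) ∧
      IsWeightedHomogeneous (fun p : Fin n × Fin 2 => Finsupp.single p.1 1) f
        (Finsupp.equivFunOnFinite.symm v) := by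
  simp [Rv, Submodule.mem_iInf, sub_eq_zero, Matrix.SpecialLinearGroup, Subtype.forall]

lemma isHomogeneous_of_mem_Rv {v : Fin n → ℕ} {f : PtRing k n} (hf : f ∈ Rv k n v) :
    f.IsHomogeneous (∑ i, v i) := by
  intro d hd
  have degree_eq := congrArg Finsupp.degree ((mem_Rv_iff.1 hf).2 hd)
  simpa [Finsupp.weight_apply, Finsupp.sum, Finsupp.degree_eq_sum] using degree_eq

lemma eval_C_shear (i j : Fin 2) (t : k) (f : PtRing k n) :
    (shear i j f).eval (C t) = subst k n (Matrix.transvection i j t) f := by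
  rw [eval_shear]
  refine DFunLike.congr_fun (algHom_ext fun p => ?_) f
  rw [aeval_X, subst_X]
  obtain ⟨a, l⟩ := p
  obtain rfl | hl := eq_or_ne l j
  · simp [Matrix.transvection, Matrix.one_apply, Matrix.single_apply, add_mul,
      Finset.sum_add_distrib, ite_mul, apply_ite C]
  · simp [Matrix.transvection, Matrix.one_apply, hl, hl.symm, ite_mul, apply_ite C]

lemma polarization_eq_zero_of_mem_Rv [IsDomain k] [Infinite k] {v : Fin n → ℕ} {f : PtRing k n}
    (hf : f ∈ Rv k n v) {i j : Fin 2} (hij : i ≠ j) : polarization i j f = 0 := by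
  have shear_eq : shear i j f = Polynomial.C f := by
    refine Polynomial.eq_of_infinite_eval_eq _ _
      ((Set.infinite_range_of_injective (C_injective (Fin n × Fin 2) k)).mono ?_)
    rintro _ ⟨t, rfl⟩
    simp [eval_C_shear, (mem_Rv_iff.1 hf).1 _ (Matrix.det_transvection_of_ne i j hij t)]
  rw [← eval_zero_shear i j (polarization i j f), ← derivative_shear hij, shear_eq,
    Polynomial.derivative_C, Polynomial.eval_zero]

end Invariants

/-! ### Graph monomials -/

section Endpoints

variable {V : Type*}

/-- The multiset of all endpoints of the edges of `Γ`, with multiplicity: the valence of `Γ` as a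
multiset of vertices, available for an arbitrary vertex type. -/
def endpoints (Γ : Multiset (V × V)) : Multiset V :=
  Γ.map Prod.fst + Γ.map Prod.snd

lemma endpoints_cons (e : V × V) (Γ : Multiset (V × V)) :
    endpoints (e ::ₘ Γ) = e.1 ::ₘ e.2 ::ₘ endpoints Γ := by
  simp only [endpoints, Multiset.map_cons, Multiset.cons_add, Multiset.add_cons,
    Multiset.cons_swap e.1]

lemma endpoints_add (Γ Δ : Multiset (V × V)) :
    endpoints (Γ + Δ) = endpoints Γ + endpoints Δ := by
  simp only [endpoints, Multiset.map_add, add_add_add_comm]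

lemma endpoints_map_swap (Γ : Multiset (V × V)) :
    endpoints (Γ.map Prod.swap) = endpoints Γ := by
  simp [endpoints, Multiset.map_map, add_comm]

lemma endpoints_map {W : Type*} (u : V → W) (Γ : Multiset (V × V)) :
    endpoints (Γ.map (Prod.map u u)) = (endpoints Γ).map u := by
  simp [endpoints, Multiset.map_map]

end Endpoints

section GraphMonomial

variable {k : Type} [CommRing k] {n : ℕ}

lemma count_endpoints (Γ : Multiset (Fin n × Fin n)) (i : Fin n) :
    (endpoints Γ).count i = valence n Γ i :=
  Multiset.count_add ..

lemma graphMonomial_zero : graphMonomial k n 0 = 1 := rfl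

lemma graphMonomial_cons (e : Fin n × Fin n) (Γ : Multiset (Fin n × Fin n)) :
    graphMonomial k n (e ::ₘ Γ) = bracket k n e.1 e.2 * graphMonomial k n Γ := by
  simp [graphMonomial]

lemma graphMonomial_add (Γ Δ : Multiset (Fin n × Fin n)) :
    graphMonomial k n (Γ + Δ) = graphMonomial k n Γ * graphMonomial k n Δ := by
  simp [graphMonomial]

lemma subst_bracket {g : Matrix (Fin 2) (Fin 2) k} (hg : g.det = 1) (a b : Fin n) :
    subst k n g (bracket k n a b) = bracket k n a b := by
  have det_eq : C (g 0 0) * C (g 1 1) - C (g 0 1) * C (g 1 0) = (1 : PtRing k n) := by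
    rw [← C_mul, ← C_mul, ← C_sub, ← Matrix.det_fin_two, hg, C_1]
  simp only [bracket, map_sub, map_mul, subst_X, Fin.sum_univ_two]
  linear_combination (X (a, 0) * X (b, 1) - X (b, 0) * X (a, 1)) * det_eq

lemma subst_graphMonomial {g : Matrix (Fin 2) (Fin 2) k} (hg : g.det = 1)
    (Γ : Multiset (Fin n × Fin n)) : subst k n g (graphMonomial k n Γ) = graphMonomial k n Γ := by
  simp [graphMonomial, map_multiset_prod, Multiset.map_map, subst_bracket hg]

lemma isWeightedHomogeneous_bracket (a b : Fin n) :
    IsWeightedHomogeneous (fun p : Fin n × Fin 2 => Finsupp.single p.1 1) (bracket k n a b)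
      (Finsupp.single a 1 + Finsupp.single b 1) := by
  have isWeightedHomogeneous_X_mul_X (a b : Fin n) :
      IsWeightedHomogeneous (fun p : Fin n × Fin 2 => Finsupp.single p.1 1)
        (X (a, 0) * X (b, 1) : PtRing k n) (Finsupp.single a 1 + Finsupp.single b 1) :=
    (isWeightedHomogeneous_X k _ (a, 0)).mul (isWeightedHomogeneous_X k _ (b, 1))
  exact (isWeightedHomogeneous_X_mul_X a b).sub
    (add_comm (Finsupp.single b 1) _ ▸ isWeightedHomogeneous_X_mul_X b a)

lemma isWeightedHomogeneous_graphMonomial (Γ : Multiset (Fin n × Fin n)) :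
    IsWeightedHomogeneous (fun p : Fin n × Fin 2 => Finsupp.single p.1 1) (graphMonomial k n Γ)
      (Finsupp.equivFunOnFinite.symm (valence n Γ)) := by
  have toFinsupp_endpoints (Γ : Multiset (Fin n × Fin n)) :
      Multiset.toFinsupp (endpoints Γ) = Finsupp.equivFunOnFinite.symm (valence n Γ) :=
    Finsupp.ext fun i => by simp [count_endpoints]
  rw [← toFinsupp_endpoints]
  clear toFinsupp_endpoints
  induction Γ using Multiset.induction_on with
  | empty => exact isWeightedHomogeneous_one k _
  | cons e Γ ih =>
    rw [graphMonomial_cons, endpoints_cons, ← Multiset.singleton_add, map_add,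
      ← Multiset.singleton_add, map_add, Multiset.toFinsupp_singleton,
      Multiset.toFinsupp_singleton, ← add_assoc]
    exact (isWeightedHomogeneous_bracket e.1 e.2).mul ih

lemma graphMonomial_mem_Rv (Γ : Multiset (Fin n × Fin n)) :
    graphMonomial k n Γ ∈ Rv k n (valence n Γ) :=
  mem_Rv_iff.2 ⟨fun _ hg => subst_graphMonomial hg Γ, isWeightedHomogeneous_graphMonomial Γ⟩

lemma bracket_mul_mem_span_range_graphMonomial (a b : Fin n) {f : PtRing k n}
    (hf : f ∈ Submodule.span k (Set.range (graphMonomial k n))) :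
    bracket k n a b * f ∈ Submodule.span k (Set.range (graphMonomial k n)) := by
  suffices Submodule.span k (Set.range (graphMonomial k n)) ≤
      (Submodule.span k (Set.range (graphMonomial k n))).comap
        (LinearMap.mulLeft k (bracket k n a b)) from this hf
  rw [Submodule.span_le]
  rintro _ ⟨Γ, rfl⟩
  exact Submodule.subset_span ⟨(a, b) ::ₘ Γ, graphMonomial_cons (a, b) Γ⟩

end GraphMonomial

section FirstFundamentalTheorem

variable {k : Type} [Field k] [CharZero k] {n : ℕ}

theorem mem_span_range_graphMonomial_of_polarization_eq_zero {N : ℕ} {f : PtRing k n}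
    (hf : f.IsHomogeneous N) (h : ∀ i j, i ≠ j → polarization i j f = 0) :
    f ∈ Submodule.span k (Set.range (graphMonomial k n)) := by
  induction N using Nat.strong_induction_on generalizing f with
  | _ N ih =>
    obtain rfl | hN := eq_or_ne N 0
    · rw [totalDegree_eq_zero_iff_eq_C.1 ((totalDegree_zero_iff_isHomogeneous _).2 hf),
        ← mul_one (C _), ← smul_eq_C_mul]
      exact Submodule.smul_mem _ _ (Submodule.subset_span ⟨0, graphMonomial_zero⟩)
    · have omega_mem (a b : Fin n) :
          cayleyOmega a b f ∈ Submodule.span k (Set.range (graphMonomial k n)) := by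
        refine ih (N - 2) (by omega) (isHomogeneous_cayleyOmega hf a b) fun i j hij => ?_
        rw [polarization_cayleyOmega hij, h i j hij]
        simp [cayleyOmega]
      have smul_mem : ((N * (N + 2) : ℕ) : k) • f ∈
          Submodule.span k (Set.range (graphMonomial k n)) := by
        rw [Nat.cast_smul_eq_nsmul, ← two_smul_sum_bracket_mul_cayleyOmega hf h]
        exact nsmul_mem (sum_mem fun a _ => sum_mem fun b _ =>
          bracket_mul_mem_span_range_graphMonomial a b (omega_mem a b)) 2
      refine (Submodule.smul_mem_iff _ ?_).1 smul_mem
      exact Nat.cast_ne_zero.2 (by positivity)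

theorem Rv_eq_span_graphMonomial (v : Fin n → ℕ) :
    Rv k n v = Submodule.span k {p | ∃ Γ, valence n Γ = v ∧ graphMonomial k n Γ = p} := by
  refine le_antisymm (fun f hf => ?_) (Submodule.span_le.2 ?_)
  · suffices Submodule.span k (Set.range (graphMonomial k n)) ≤
        (Submodule.span k {p | ∃ Γ, valence n Γ = v ∧ graphMonomial k n Γ = p}).comap
          (weightedHomogeneousComponent (fun p : Fin n × Fin 2 => Finsupp.single p.1 1)
            (Finsupp.equivFunOnFinite.symm v)) by
      rw [← (mem_Rv_iff.1 hf).2.weightedHomogeneousComponent_same]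
      exact this (mem_span_range_graphMonomial_of_polarization_eq_zero (isHomogeneous_of_mem_Rv hf)
        fun _ _ => polarization_eq_zero_of_mem_Rv hf)
    rw [Submodule.span_le]
    rintro _ ⟨Γ, rfl⟩
    have homogeneous := isWeightedHomogeneous_graphMonomial (k := k) Γ
    rw [SetLike.mem_coe, Submodule.mem_comap]
    by_cases hΓ : valence n Γ = v
    · subst hΓ
      rw [homogeneous.weightedHomogeneousComponent_same]
      exact Submodule.subset_span ⟨Γ, rfl, rfl⟩
    · rw [homogeneous.weightedHomogeneousComponent_ne _
        (Finsupp.equivFunOnFinite.symm.injective.ne (Ne.symm hΓ))]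
      exact zero_mem _
  · rintro _ ⟨Γ, rfl, rfl⟩
    exact graphMonomial_mem_Rv Γ

end FirstFundamentalTheorem

/-! ### Regular bipartite multigraphs -/

section DisjSum

variable {α β : Type*}

lemma disjSum_inj {s s' : Multiset α} {t t' : Multiset β} :
    s.disjSum t = s'.disjSum t' ↔ s = s' ∧ t = t' := by
  classical
  refine ⟨fun h => ⟨?_, ?_⟩, fun ⟨hs, ht⟩ => hs ▸ ht ▸ rfl⟩
  · ext a
    simpa [Multiset.disjSum, Multiset.count_map_eq_count' _ _ Sum.inl_injective] using
      congrArg (Multiset.count (.inl a)) h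
  · ext b
    simpa [Multiset.disjSum, Multiset.count_map_eq_count' _ _ Sum.inr_injective] using
      congrArg (Multiset.count (.inr b)) h

lemma nsmul_disjSum (m : ℕ) (s : Multiset α) (t : Multiset β) :
    m • s.disjSum t = (m • s).disjSum (m • t) := by
  simp only [Multiset.disjSum, smul_add, Multiset.map_nsmul]

variable [Fintype α] [Fintype β]

lemma univ_val_disjSum_univ_val :
    (Finset.univ : Finset (α ⊕ β)).val =
      (Finset.univ : Finset α).val.disjSum (Finset.univ : Finset β).val := by
  rw [← Finset.univ_disjSum_univ, Finset.val_disjSum]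

lemma countP_isLeft_nsmul_univ (h : Fintype.card α = Fintype.card β) (m : ℕ) :
    (m • (Finset.univ : Finset (α ⊕ β)).val).countP (·.isLeft) =
      (m • (Finset.univ : Finset (α ⊕ β)).val).countP (·.isRight) := by
  simp [univ_val_disjSum_univ_val, Multiset.disjSum, Multiset.countP_nsmul, Multiset.countP_map, h]

end DisjSum

section Multigraph

variable {V W L R : Type*}

lemma exists_map_eq_and_endpoints_eq (u : V → W) {Γ : Multiset (W × W)} {T : Multiset V}
    (hT : T.map u = endpoints Γ) :
    ∃ Δ : Multiset (V × V), Δ.map (Prod.map u u) = Γ ∧ endpoints Δ = T := by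
  classical
  induction Γ using Multiset.induction_on generalizing T with
  | empty => exact ⟨0, rfl, (Multiset.map_eq_zero.1 hT).symm⟩
  | cons e Γ ih =>
    obtain ⟨a, ha, hae, hT⟩ := (Multiset.map_eq_cons ..).2 (hT.trans (endpoints_cons e Γ))
    obtain ⟨b, hb, hbe, hT⟩ := (Multiset.map_eq_cons ..).2 hT
    obtain ⟨Δ, rfl, hΔ⟩ := ih hT
    refine ⟨(a, b) ::ₘ Δ, ?_, ?_⟩
    · rw [Multiset.map_cons, Prod.map_apply, hae, hbe]
    · rw [endpoints_cons, hΔ, Multiset.cons_erase hb, Multiset.cons_erase ha]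

lemma exists_count_map_univ_eq {ι : Type*} [Fintype ι] [DecidableEq ι] [Fintype V] (w : ι → ℕ)
    (hw : Fintype.card V = ∑ i, w i) :
    ∃ u : V → ι, ∀ i, (Finset.univ.val.map u).count i = w i := by
  classical
  let e : V ≃ Σ i, Fin (w i) := Fintype.equivOfCardEq (by simp [hw])
  refine ⟨fun v => (e v).1, fun i => ?_⟩
  rw [Multiset.count_map, ← Finset.filter_val, ← Finset.card_def, ← Fintype.card_subtype]
  let fiber_equiv : {v // i = (e v).1} ≃ Fin (w i) :=
    (e.subtypeEquiv (q := fun x => x.1 = i) fun v => eq_comm).trans (Equiv.sigmaSubtype i)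
  rw [Fintype.card_congr fiber_equiv, Fintype.card_fin]

lemma card_filter_mem_of_map_eq_nsmul_univ [Fintype V] [DecidableEq V] {m : ℕ} {Γ : Multiset W}
    {g : W → V} (hg : Γ.map g = m • Finset.univ.val) (S : Finset V) :
    (Γ.filter (g · ∈ S)).card = m * S.card := by
  have card_eq := congrArg (fun T : Multiset V => (T.filter (· ∈ S)).card) hg
  simpa [Multiset.filter_map, Multiset.filter_nsmul, ← Finset.filter_val] using card_eq

variable [Fintype L]

/-- The perfect matching of `L` with `R` given by the bijection `σ`, as a bipartite graph. -/
def matching (σ : L ≃ R) : Multiset (L × R) :=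
  Finset.univ.val.map fun l => (l, σ l)

lemma map_fst_matching (σ : L ≃ R) : (matching σ).map Prod.fst = Finset.univ.val := by
  simp [matching]

variable [Fintype R]

lemma map_snd_matching (σ : L ≃ R) : (matching σ).map Prod.snd = Finset.univ.val := by
  rw [matching, Multiset.map_map]
  exact congrArg Finset.val (Finset.map_univ_equiv σ)

lemma exists_matching_le {m : ℕ} (hm : m ≠ 0) {Γ : Multiset (L × R)}
    (h₁ : Γ.map Prod.fst = m • Finset.univ.val) (h₂ : Γ.map Prod.snd = m • Finset.univ.val) :
    ∃ σ : L ≃ R, matching σ ≤ Γ := by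
  classical
  have card_eq : Fintype.card L = Fintype.card R := by
    have nsmul_card_eq := congrArg Multiset.card h₁
    rw [Multiset.card_map, ← Γ.card_map Prod.snd, h₂, Multiset.card_nsmul,
      Multiset.card_nsmul] at nsmul_card_eq
    exact (Nat.eq_of_mul_eq_mul_left hm.bot_lt nsmul_card_eq).symm
  -- The `m * #S` edges leaving `S` are among the `m * #N(S)` edges meeting its neighbours `N(S)`.
  have hall (S : Finset L) : S.card ≤ (S.biUnion fun l => {r | (l, r) ∈ Γ}).card := by
    refine Nat.le_of_mul_le_mul_left ?_ hm.bot_lt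
    rw [← card_filter_mem_of_map_eq_nsmul_univ h₁, ← card_filter_mem_of_map_eq_nsmul_univ h₂]
    refine Multiset.card_le_card (Multiset.le_filter.2 ⟨Multiset.filter_le _ _, fun e he => ?_⟩)
    obtain ⟨he, heS⟩ := Multiset.mem_filter.1 he
    simpa using ⟨e.1, heS, he⟩
  obtain ⟨f, f_injective, hf⟩ :=
    (Finset.all_card_le_biUnion_card_iff_exists_injective _).1 hall
  refine ⟨Equiv.ofBijective f
    ((Fintype.bijective_iff_injective_and_card f).2 ⟨f_injective, card_eq⟩), ?_⟩
  refine (Multiset.le_iff_subset (Finset.univ.nodup.map fun a b h => congrArg Prod.fst h)).2 ?_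
  intro e he
  obtain ⟨l, -, rfl⟩ := Multiset.mem_map.1 he
  simpa using hf l

lemma exists_eq_sum_matching {m : ℕ} {Γ : Multiset (L × R)}
    (h₁ : Γ.map Prod.fst = m • Finset.univ.val) (h₂ : Γ.map Prod.snd = m • Finset.univ.val) :
    ∃ σ : Fin m → L ≃ R, Γ = ∑ j, matching (σ j) := by
  induction m generalizing Γ with
  | zero => exact ⟨Fin.elim0, by simpa using h₁⟩
  | succ m ih =>
    obtain ⟨σ₀, hσ₀⟩ := exists_matching_le m.succ_ne_zero h₁ h₂
    obtain ⟨Δ, rfl⟩ := Multiset.le_iff_exists_add.1 hσ₀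
    rw [Multiset.map_add, map_fst_matching, succ_nsmul'] at h₁
    rw [Multiset.map_add, map_snd_matching, succ_nsmul'] at h₂
    obtain ⟨σ, rfl⟩ := ih (add_left_cancel h₁) (add_left_cancel h₂)
    exact ⟨Fin.cons σ₀ σ, by simp [Fin.sum_univ_succ]⟩

end Multigraph

/-! ### Straightening to bipartite graphs -/

section Bipartite

variable {L R : Type*}

/-- The graph on `L ⊕ R` underlying a bipartite graph, all of whose edges go from `L` to `R`. -/
def bipartiteGraph (Γ : Multiset (L × R)) : Multiset ((L ⊕ R) × (L ⊕ R)) :=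
  Γ.map (Prod.map Sum.inl Sum.inr)

lemma bipartiteGraph_add (Γ Δ : Multiset (L × R)) :
    bipartiteGraph (Γ + Δ) = bipartiteGraph Γ + bipartiteGraph Δ :=
  Multiset.map_add ..

lemma endpoints_bipartiteGraph (Γ : Multiset (L × R)) :
    endpoints (bipartiteGraph Γ) = (Γ.map Prod.fst).disjSum (Γ.map Prod.snd) := by
  simp [endpoints, bipartiteGraph, Multiset.disjSum, Multiset.map_map]

lemma exists_eq_add_bipartiteGraph_add_swap_bipartiteGraph (Γ : Multiset ((L ⊕ R) × (L ⊕ R))) :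
    ∃ (A : Multiset (L × L)) (B : Multiset (R × R)) (C D : Multiset (L × R)),
      Γ = A.map (Prod.map Sum.inl Sum.inl) + B.map (Prod.map Sum.inr Sum.inr) +
        bipartiteGraph C + (bipartiteGraph D).map Prod.swap := by
  induction Γ using Multiset.induction_on with
  | empty => exact ⟨0, 0, 0, 0, by simp [bipartiteGraph]⟩
  | cons e Γ ih =>
    obtain ⟨A, B, C, D, rfl⟩ := ih
    obtain ⟨l | r, l' | r'⟩ := e
    · exact ⟨(l, l') ::ₘ A, B, C, D, by simp⟩
    · exact ⟨A, B, (l, r') ::ₘ C, D, by simp [bipartiteGraph]⟩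
    · exact ⟨A, B, C, (l', r) ::ₘ D, by simp [bipartiteGraph]⟩
    · exact ⟨A, (r, r') ::ₘ B, C, D, by simp⟩

end Bipartite

section Straightening

variable {L R : Type*} {k : Type} [CommRing k] {n : ℕ}

lemma bracket_swap (a b : Fin n) : bracket k n a b = -bracket k n b a := by
  simp only [bracket]
  ring

lemma bracket_plucker (a b c d : Fin n) :
    bracket k n a b * bracket k n c d =
      bracket k n a c * bracket k n b d - bracket k n a d * bracket k n b c := by
  simp only [bracket]
  ring

lemma graphMonomial_map_swap (Γ : Multiset (Fin n × Fin n)) :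
    graphMonomial k n (Γ.map Prod.swap) = (-1) ^ Γ.card * graphMonomial k n Γ := by
  induction Γ using Multiset.induction_on with
  | empty => simp
  | cons e Γ ih =>
    rw [Multiset.map_cons, graphMonomial_cons, graphMonomial_cons, ih, Prod.fst_swap,
      Prod.snd_swap, bracket_swap, Multiset.card_cons]
    ring

variable (k) in
/-- The span of the monomials of the bipartite graphs with multiset of endpoints `T`, after the
vertices have been identified along `u`. -/
noncomputable def bipartiteSpan (u : L ⊕ R → Fin n) (T : Multiset (L ⊕ R)) :
    Submodule k (PtRing k n) :=
  Submodule.span k {p | ∃ Γ : Multiset (L × R), endpoints (bipartiteGraph Γ) = T ∧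
    graphMonomial k n ((bipartiteGraph Γ).map (Prod.map u u)) = p}

variable {u : L ⊕ R → Fin n}

lemma graphMonomial_map_bipartiteGraph_sum {ι : Type*} (s : Finset ι)
    (Γ : ι → Multiset (L × R)) :
    graphMonomial k n ((bipartiteGraph (∑ j ∈ s, Γ j)).map (Prod.map u u)) =
      ∏ j ∈ s, graphMonomial k n ((bipartiteGraph (Γ j)).map (Prod.map u u)) := by
  classical
  induction s using Finset.induction_on with
  | empty => exact graphMonomial_zero
  | insert j s hj ih =>
    rw [Finset.sum_insert hj, Finset.prod_insert hj, bipartiteGraph_add, Multiset.map_add,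
      graphMonomial_add, ih]

lemma graphMonomial_map_bipartiteGraph_mem_bipartiteSpan (Γ : Multiset (L × R)) :
    graphMonomial k n ((bipartiteGraph Γ).map (Prod.map u u)) ∈
      bipartiteSpan k u (endpoints (bipartiteGraph Γ)) :=
  Submodule.subset_span ⟨Γ, rfl, rfl⟩

lemma graphMonomial_map_add_mem_bipartiteSpan {Γ Δ : Multiset ((L ⊕ R) × (L ⊕ R))}
    (hΓ : graphMonomial k n (Γ.map (Prod.map u u)) ∈ bipartiteSpan k u (endpoints Γ))
    (hΔ : graphMonomial k n (Δ.map (Prod.map u u)) ∈ bipartiteSpan k u (endpoints Δ)) :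
    graphMonomial k n ((Γ + Δ).map (Prod.map u u)) ∈ bipartiteSpan k u (endpoints (Γ + Δ)) := by
  suffices bipartiteSpan k u (endpoints Γ) * bipartiteSpan k u (endpoints Δ) ≤
      bipartiteSpan k u (endpoints (Γ + Δ)) by
    rw [Multiset.map_add, graphMonomial_add]
    exact this (Submodule.mul_mem_mul hΓ hΔ)
  simp only [bipartiteSpan, Submodule.span_mul_span, Submodule.span_le]
  rintro _ ⟨_, ⟨Γ', hΓ', rfl⟩, _, ⟨Δ', hΔ', rfl⟩, rfl⟩
  refine Submodule.subset_span ⟨Γ' + Δ', ?_, ?_⟩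
  · rw [bipartiteGraph_add, endpoints_add, endpoints_add, hΓ', hΔ']
  · rw [bipartiteGraph_add, Multiset.map_add, graphMonomial_add]

lemma graphMonomial_map_swap_bipartiteGraph_mem_bipartiteSpan (Γ : Multiset (L × R)) :
    graphMonomial k n (((bipartiteGraph Γ).map Prod.swap).map (Prod.map u u)) ∈
      bipartiteSpan k u (endpoints ((bipartiteGraph Γ).map Prod.swap)) := by
  have monomial_eq : graphMonomial k n (((bipartiteGraph Γ).map Prod.swap).map (Prod.map u u)) =
      ((-1) ^ Γ.card : k) • graphMonomial k n ((bipartiteGraph Γ).map (Prod.map u u)) := by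
    rw [Multiset.map_map, Prod.map_comp_swap, ← Multiset.map_map, graphMonomial_map_swap,
      smul_eq_C_mul, Multiset.card_map, bipartiteGraph, Multiset.card_map]
    simp
  rw [monomial_eq, endpoints_map_swap]
  exact Submodule.smul_mem _ _ (graphMonomial_map_bipartiteGraph_mem_bipartiteSpan Γ)

lemma graphMonomial_pair_mem_bipartiteSpan (l l' : L) (r r' : R) :
    graphMonomial k n (({(.inl l, .inl l'), (.inr r, .inr r')} :
        Multiset ((L ⊕ R) × (L ⊕ R))).map (Prod.map u u)) ∈
      bipartiteSpan k u (endpoints {(.inl l, .inl l'), (.inr r, .inr r')}) := by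
  have monomial_eq : graphMonomial k n (({(.inl l, .inl l'), (.inr r, .inr r')} :
      Multiset ((L ⊕ R) × (L ⊕ R))).map (Prod.map u u)) =
        graphMonomial k n ((bipartiteGraph {(l, r), (l', r')}).map (Prod.map u u)) -
          graphMonomial k n ((bipartiteGraph {(l, r'), (l', r)}).map (Prod.map u u)) := by
    simpa [bipartiteGraph, graphMonomial] using bracket_plucker ..
  rw [monomial_eq]
  refine sub_mem (Submodule.subset_span ⟨_, ?_, rfl⟩) (Submodule.subset_span ⟨_, ?_, rfl⟩) <;>
  · simp only [endpoints, bipartiteGraph, Multiset.insert_eq_cons, ← Multiset.singleton_add,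
      Multiset.map_add, Multiset.map_singleton, Prod.map_apply]
    abel

lemma graphMonomial_map_inl_add_map_inr_mem_bipartiteSpan {A : Multiset (L × L)}
    {B : Multiset (R × R)} (h : A.card = B.card) :
    graphMonomial k n
        ((A.map (Prod.map Sum.inl Sum.inl) + B.map (Prod.map Sum.inr Sum.inr)).map (Prod.map u u)) ∈
      bipartiteSpan k u
        (endpoints (A.map (Prod.map Sum.inl Sum.inl) + B.map (Prod.map Sum.inr Sum.inr))) := by
  induction A using Multiset.induction_on generalizing B with
  | empty =>
    obtain rfl : B = 0 := Multiset.card_eq_zero.1 h.symm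
    exact graphMonomial_map_bipartiteGraph_mem_bipartiteSpan 0
  | cons a A ih =>
    obtain ⟨b, B, rfl, hB⟩ := Multiset.card_eq_succ_iff.1 (h.symm.trans (A.card_cons a))
    have edges_eq : (a ::ₘ A).map (Prod.map Sum.inl Sum.inl) +
        (b ::ₘ B).map (Prod.map Sum.inr Sum.inr) =
        ({(.inl a.1, .inl a.2), (.inr b.1, .inr b.2)} : Multiset ((L ⊕ R) × (L ⊕ R))) +
          (A.map (Prod.map Sum.inl Sum.inl) + B.map (Prod.map Sum.inr Sum.inr)) := by
      simp [Prod.map, Multiset.cons_swap (Sum.inl a.1, Sum.inl a.2)]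
    rw [edges_eq]
    exact graphMonomial_map_add_mem_bipartiteSpan
      (graphMonomial_pair_mem_bipartiteSpan a.1 a.2 b.1 b.2) (ih hB.symm)

theorem graphMonomial_map_mem_bipartiteSpan {Γ : Multiset ((L ⊕ R) × (L ⊕ R))}
    (h : (endpoints Γ).countP (·.isLeft) = (endpoints Γ).countP (·.isRight)) :
    graphMonomial k n (Γ.map (Prod.map u u)) ∈ bipartiteSpan k u (endpoints Γ) := by
  obtain ⟨A, B, C, D, rfl⟩ := exists_eq_add_bipartiteGraph_add_swap_bipartiteGraph Γ
  have card_eq : A.card = B.card := by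
    have sum_card_eq :
        A.card + C.card + (A.card + D.card) = B.card + D.card + (B.card + C.card) := by
      simpa [endpoints, bipartiteGraph, Multiset.countP_map] using h
    omega
  exact graphMonomial_map_add_mem_bipartiteSpan
    (graphMonomial_map_add_mem_bipartiteSpan
      (graphMonomial_map_inl_add_map_inr_mem_bipartiteSpan card_eq)
      (graphMonomial_map_bipartiteGraph_mem_bipartiteSpan C))
    (graphMonomial_map_swap_bipartiteGraph_mem_bipartiteSpan D)

end Straightening

section Factorisation

variable {L R : Type*} [Fintype L] [Fintype R] {k : Type} [CommRing k] {n : ℕ}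

lemma exists_eq_sum_matching_of_endpoints_bipartiteGraph {m : ℕ} {Γ : Multiset (L × R)}
    (hΓ : endpoints (bipartiteGraph Γ) = m • Finset.univ.val) :
    ∃ σ : Fin m → L ≃ R, Γ = ∑ j, matching (σ j) := by
  rw [endpoints_bipartiteGraph, univ_val_disjSum_univ_val, nsmul_disjSum, disjSum_inj] at hΓ
  exact exists_eq_sum_matching hΓ.1 hΓ.2

lemma graphMonomial_map_matching_mem_Rv (u : L ⊕ R → Fin n) (σ : L ≃ R) :
    graphMonomial k n ((bipartiteGraph (matching σ)).map (Prod.map u u)) ∈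
      Rv k n fun i => (Finset.univ.val.map u).count i := by
  have valence_eq : valence n ((bipartiteGraph (matching σ)).map (Prod.map u u)) =
      fun i => (Finset.univ.val.map u).count i := by
    funext i
    rw [← count_endpoints, endpoints_map, endpoints_bipartiteGraph, map_fst_matching,
      map_snd_matching, univ_val_disjSum_univ_val]
  exact valence_eq ▸ graphMonomial_mem_Rv _

end Factorisation

/-- Generation in degree 1 for arbitrary weights: if `w_1 + … + w_n` is even, every invariant
of multidegree `m·w` is a linear combination of products of `m` invariants of multidegree `w`. -/
theorem stmt5 (k : Type) [Field k] [CharZero k] (n : ℕ) (w : Fin n → ℕ)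
    (hw : Even (∑ i, w i)) (m : ℕ) (hm : 1 ≤ m)
    (f : PtRing k n) (hf : f ∈ Rv k n fun i => m * w i) :
    f ∈ Submodule.span k
      {p : PtRing k n | ∃ g : Fin m → PtRing k n,
        (∀ j, g j ∈ Rv k n w) ∧ p = ∏ j, g j} := by
  obtain ⟨l, hl⟩ := hw
  obtain ⟨u, hu⟩ := exists_count_map_univ_eq (V := Fin l ⊕ Fin l) w (by simp [hl])
  obtain rfl := funext hu
  rw [Rv_eq_span_graphMonomial] at hf
  refine Submodule.span_le.2 ?_ hf
  rintro _ ⟨Γ, hΓ, rfl⟩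
  have map_eq : (m • Finset.univ.val).map u = endpoints Γ := by
    ext i
    rw [count_endpoints, hΓ, Multiset.map_nsmul, Multiset.count_nsmul]
  obtain ⟨Δ, rfl, hΔ⟩ := exists_map_eq_and_endpoints_eq u map_eq
  have balanced : (endpoints Δ).countP (·.isLeft) = (endpoints Δ).countP (·.isRight) :=
    hΔ ▸ countP_isLeft_nsmul_univ rfl m
  refine Submodule.span_le.2 ?_ (graphMonomial_map_mem_bipartiteSpan balanced)
  rintro _ ⟨Λ, hΛ, rfl⟩
  obtain ⟨σ, rfl⟩ := exists_eq_sum_matching_of_endpoints_bipartiteGraph (hΛ.trans hΔ)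
  exact Submodule.subset_span ⟨_, fun j => graphMonomial_map_matching_mem_Rv u (σ j),
    graphMonomial_map_bipartiteGraph_sum _ _⟩
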